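/- Let d ≥ 1 and let F ⊆ ℤ^d be a finite set, and define F̄ = (0,1]^d + F ⊆ ℝ^d. Then F̄ tiles ℝ^d by translations — i.e., there exists C ⊆ ℝ^d such that the translates F̄ + c, for c ∈ C, are pairwise disjoint and their union is ℝ^d — if and only if F tiles ℤ^d, i.e., there exists C₀ ⊆ ℤ^d with F ⊕ C₀ = ℤ^d. -/

import Mathlib

/-!
Every `x ∈ ℝ^d` lies in exactly one cell `(0,1]^d + z` with `z ∈ ℤ^d`, namely `z = ⌈x⌉ - 1`, and
`x ∈ F̄` if and only if `⌈x⌉ - 1 ∈ F`. For integral `n` this gives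
`n ∈ c + F̄ ↔ n ∈ (⌊c⌋ + 1) + F`, so the points of `ℤ^d` inside a tiling of `ℝ^d` by `F̄` see a
tiling by `F`. Conversely, for integral `c`, `x ∈ c + F̄ ↔ ⌈x⌉ - 1 ∈ c + F`, so a translation set
for `F` is one for `F̄`.
-/

/-- `F ⊕ C = E` in `ℤ^d` : every sum `f + c` lies in `E`, and every element of `E`
can be uniquely expressed as `f + c` with `f ∈ F` and `c ∈ C`. -/
def TileOplus {d : ℕ} (F C E : Set (Fin d → ℤ)) : Prop :=
  (∀ f ∈ F, ∀ c ∈ C, f + c ∈ E) ∧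
    ∀ e ∈ E, ∃! p : (Fin d → ℤ) × (Fin d → ℤ), p.1 ∈ F ∧ p.2 ∈ C ∧ p.1 + p.2 = e

/-- The set `F̄ = (0,1]^d + F ⊆ ℝ^d` associated to a set `F ⊆ ℤ^d`. -/
def cubeSet {d : ℕ} (F : Set (Fin d → ℤ)) : Set (Fin d → ℝ) :=
  {x | ∃ (t : Fin d → ℝ) (f : Fin d → ℤ),
    (∀ i, t i ∈ Set.Ioc (0 : ℝ) 1) ∧ f ∈ F ∧ x = t + fun i => (f i : ℝ)}

open scoped Pointwise in
theorem isComplement_iff_pairwiseDisjoint_vadd_and_iUnion_vadd_eq_univ {G : Type*} [AddGroup G]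
    {C K : Set G} :
    AddSubgroup.IsComplement C K ↔
      C.PairwiseDisjoint (· +ᵥ K) ∧ ⋃ c ∈ C, c +ᵥ K = Set.univ := by
  refine ⟨fun h => ⟨h.pairwiseDisjoint_vadd, Set.iUnion_vadd_left_image.trans h.add_eq⟩, ?_⟩
  rintro ⟨hdisj, hcover⟩
  rw [AddSubgroup.isComplement_iff_existsUnique_neg_add_mem]
  intro g
  have hg : g ∈ ⋃ c ∈ C, c +ᵥ K := hcover ▸ Set.mem_univ g
  obtain ⟨c, hc, hgc⟩ := Set.mem_iUnion₂.1 hg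
  refine ⟨⟨c, hc⟩, Set.mem_vadd_set_iff_neg_vadd_mem.1 hgc, fun c' hgc' => Subtype.ext ?_⟩
  exact hdisj.elim_set c'.2 hc g (Set.mem_vadd_set_iff_neg_vadd_mem.2 hgc') hgc

theorem isComplement_image_of_neg_add_mem_iff {G H : Type*} [AddGroup G] [AddGroup H]
    {C K : Set G} {L : Set H} {p : H → G} {q : G → H} (hCK : AddSubgroup.IsComplement C K)
    (hpq : ∀ y, ∀ c ∈ C, -q c + y ∈ L ↔ -c + p y ∈ K) :
    AddSubgroup.IsComplement (q '' C) L := by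
  rw [AddSubgroup.isComplement_iff_existsUnique_neg_add_mem] at hCK ⊢
  intro y
  obtain ⟨⟨c, hc⟩, hcK, hunique⟩ := hCK (p y)
  refine ⟨⟨q c, c, hc, rfl⟩, (hpq y c hc).2 hcK, ?_⟩
  rintro ⟨_, c', hc', rfl⟩ hL
  have hcc' : c' = c := congrArg Subtype.val (hunique ⟨c', hc'⟩ ((hpq y c' hc').1 hL))
  exact Subtype.ext (congrArg q hcc')

theorem tileOplus_univ_iff_isComplement {d : ℕ} {F C : Set (Fin d → ℤ)} :
    TileOplus F C Set.univ ↔ AddSubgroup.IsComplement C F := by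
  rw [AddSubgroup.isComplement_iff_existsUnique_neg_add_mem]
  constructor
  · rintro ⟨-, h⟩ e
    obtain ⟨⟨f, c⟩, ⟨hf, hc, rfl⟩, hunique⟩ := h e trivial
    refine ⟨⟨c, hc⟩, by simpa using hf, fun c' hc' => Subtype.ext ?_⟩
    exact congrArg Prod.snd (hunique (-c' + (f + c), c') ⟨hc', c'.2, neg_add_cancel_comm _ _⟩)
  · refine fun h => ⟨fun _ _ _ _ => trivial, fun e _ => ?_⟩
    obtain ⟨⟨c, hc⟩, hf, hunique⟩ := h e
    refine ⟨(-c + e, c), ⟨hf, hc, neg_add_cancel_comm _ _⟩, ?_⟩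
    rintro ⟨f', c'⟩ ⟨hf', hc', rfl⟩
    obtain rfl : c' = c := congrArg Subtype.val (hunique ⟨c', hc'⟩ (by simpa using hf'))
    simp

section CubeIndex

variable {ι R : Type*} [Ring R] [LinearOrder R] [FloorRing R]

/-- The lattice point `z` for which `x` lies in the cell `(0,1]^ι + z`. As cells contain their upper
faces, this is `⌈x⌉ - 1` and not `⌊x⌋`. -/
def cubeIndex (x : ι → R) : ι → ℤ := fun i => ⌈x i⌉ - 1

variable [IsStrictOrderedRing R]

theorem cubeIndex_eq_iff {x : ι → R} {z : ι → ℤ} :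
    cubeIndex x = z ↔ ∀ i, x i - z i ∈ Set.Ioc (0 : R) 1 := by
  simp only [funext_iff, cubeIndex, sub_eq_iff_eq_add, Int.ceil_eq_iff, Set.mem_Ioc, Int.cast_add,
    Int.cast_one, add_sub_cancel_right, sub_pos, sub_le_iff_le_add']

theorem cubeIndex_neg_intCast_add (z : ι → ℤ) (x : ι → R) :
    cubeIndex (-(fun i => (z i : R)) + x) = -z + cubeIndex x := by
  funext i
  simp only [cubeIndex, Pi.add_apply, Pi.neg_apply, ← Int.cast_neg, Int.ceil_intCast_add,
    add_sub_assoc]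

theorem cubeIndex_neg_add_intCast (x : ι → R) (z : ι → ℤ) :
    cubeIndex (-x + fun i => (z i : R)) = -(fun i => ⌊x i⌋ + 1) + z := by
  funext i
  simp only [cubeIndex, Pi.add_apply, Pi.neg_apply, Int.ceil_add_intCast, Int.ceil_neg]
  ring

end CubeIndex

theorem mem_cubeSet_iff {d : ℕ} {F : Set (Fin d → ℤ)} {x : Fin d → ℝ} :
    x ∈ cubeSet F ↔ cubeIndex x ∈ F := by
  constructor
  · rintro ⟨t, f, ht, hf, rfl⟩
    have hindex : cubeIndex (t + fun i => (f i : ℝ)) = f :=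
      cubeIndex_eq_iff.2 fun i => by simpa only [Pi.add_apply, add_sub_cancel_right] using ht i
    rwa [hindex]
  · exact fun hx => ⟨_, cubeIndex x, cubeIndex_eq_iff.1 rfl, hx, (sub_add_cancel x _).symm⟩

theorem isComplement_floor_add_one_image {d : ℕ} {F : Set (Fin d → ℤ)} {C : Set (Fin d → ℝ)}
    (h : AddSubgroup.IsComplement C (cubeSet F)) :
    AddSubgroup.IsComplement ((fun c i => ⌊c i⌋ + 1) '' C) F :=
  isComplement_image_of_neg_add_mem_iff h fun z c _ => by
    rw [mem_cubeSet_iff, cubeIndex_neg_add_intCast]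

theorem isComplement_intCast_image_cubeSet {d : ℕ} {F C : Set (Fin d → ℤ)}
    (h : AddSubgroup.IsComplement C F) :
    AddSubgroup.IsComplement ((fun c i => (c i : ℝ)) '' C) (cubeSet F) :=
  isComplement_image_of_neg_add_mem_iff h fun x c _ => by
    rw [mem_cubeSet_iff, cubeIndex_neg_intCast_add]

theorem cubeSet_tiles_real_iff_tiles_int_general {d : ℕ} (F : Set (Fin d → ℤ)) :
    (∃ C : Set (Fin d → ℝ),
        (∀ c₁ ∈ C, ∀ c₂ ∈ C, c₁ ≠ c₂ →
          Disjoint ((fun x => c₁ + x) '' cubeSet F) ((fun x => c₂ + x) '' cubeSet F)) ∧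
        (⋃ c ∈ C, (fun x => c + x) '' cubeSet F) = Set.univ) ↔
      ∃ C₀ : Set (Fin d → ℤ), TileOplus F C₀ Set.univ := by
  constructor
  · rintro ⟨C, hC⟩
    have hcompl : AddSubgroup.IsComplement C (cubeSet F) :=
      isComplement_iff_pairwiseDisjoint_vadd_and_iUnion_vadd_eq_univ.2 hC
    exact ⟨_, tileOplus_univ_iff_isComplement.2 (isComplement_floor_add_one_image hcompl)⟩
  · rintro ⟨C₀, hC₀⟩
    have hcompl : AddSubgroup.IsComplement C₀ F := tileOplus_univ_iff_isComplement.1 hC₀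
    exact ⟨_, isComplement_iff_pairwiseDisjoint_vadd_and_iUnion_vadd_eq_univ.1
      (isComplement_intCast_image_cubeSet hcompl)⟩

/-- For a finite set `F ⊆ ℤ^d` (`d ≥ 1`), the set `F̄ = (0,1]^d + F` tiles `ℝ^d` by
translations if and only if `F` tiles `ℤ^d`. -/
theorem cubeSet_tiles_real_iff_tiles_int (d : ℕ) (hd : 1 ≤ d)
    (F : Set (Fin d → ℤ)) (hF : F.Finite) :
    (∃ C : Set (Fin d → ℝ),
        (∀ c₁ ∈ C, ∀ c₂ ∈ C, c₁ ≠ c₂ →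
          Disjoint ((fun x => c₁ + x) '' cubeSet F) ((fun x => c₂ + x) '' cubeSet F)) ∧
        (⋃ c ∈ C, (fun x => c + x) '' cubeSet F) = Set.univ) ↔
      ∃ C₀ : Set (Fin d → ℤ), TileOplus F C₀ Set.univ :=
  cubeSet_tiles_real_iff_tiles_int_general F
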